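/- For every multi-index α ∈ ℕ² the following four inequalities hold, where all sums range over multi-indices β ≤ α with 0 < |β| < |α|: (1) Σ |α|²/(|β|³(|α|−|β|)²) ≤ 8π²; (2) Σ |α|²/(|β|²(|α|−|β|)²) ≤ 8π²|α|; (3) Σ |α|/(|β|³(|α|−|β|)) ≤ 8π²; (4) Σ |α|³/(|β|⁴(|α|−|β|)³) ≤ 8π². -/

import Mathlib

open Finset

/-- The index set: multi-indices `β ≤ α` (componentwise) with `0 < |β| < |α|`. -/
def midx (α : ℕ × ℕ) : Finset (ℕ × ℕ) :=
  ((Finset.range (α.1 + 1)) ×ˢ (Finset.range (α.2 + 1))).filter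
    (fun β => 0 < β.1 + β.2 ∧ β.1 + β.2 < α.1 + α.2)

/-!
Write `n = |α|`, `k = |β|` and `m = n - k`. At most `k + 1 ≤ 2k` multi-indices `β` have degree `k`,
so the first sum is at most `2 ∑ (n / (k m))²` over `1 ≤ k < n`. As `n / (k m) = 1 / k + 1 / m`,
this is at most `4 ∑ (1 / k² + 1 / m²) ≤ 8 ζ(2) = 4π² / 3`. The other three summands are bounded by
`|α|`, `1` and `2` times the first one, respectively, because `k ≤ n`, `m ≤ n` and
`1 / k + 1 / m ≤ 2`.
-/

section Field

variable {K : Type*} [Field K] [LinearOrder K] [IsStrictOrderedRing K] {x y : K}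

theorem add_div_mul_sq_le (hx : x ≠ 0) (hy : y ≠ 0) :
    ((x + y) / (x * y)) ^ 2 ≤ 2 * (1 / x ^ 2 + 1 / y ^ 2) := by
  calc ((x + y) / (x * y)) ^ 2 = (1 / x + 1 / y) ^ 2 := by rw [one_div_add_one_div hx hy]
    _ ≤ 2 * ((1 / x) ^ 2 + (1 / y) ^ 2) := add_sq_le
    _ = 2 * (1 / x ^ 2 + 1 / y ^ 2) := by simp only [one_div_pow]

theorem add_sq_div_sq_mul_sq_le (hx : 0 < x) (hy : 0 < y) :
    (x + y) ^ 2 / (x ^ 2 * y ^ 2) ≤ (x + y) * ((x + y) ^ 2 / (x ^ 3 * y ^ 2)) := by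
  calc (x + y) ^ 2 / (x ^ 2 * y ^ 2) = x * ((x + y) ^ 2 / (x ^ 3 * y ^ 2)) := by field_simp
    _ ≤ (x + y) * ((x + y) ^ 2 / (x ^ 3 * y ^ 2)) := by gcongr; linarith

theorem add_div_cube_mul_le (hx : 0 < x) (hy : 0 < y) :
    (x + y) / (x ^ 3 * y) ≤ (x + y) ^ 2 / (x ^ 3 * y ^ 2) := by
  calc (x + y) / (x ^ 3 * y) = (x + y) * y / (x ^ 3 * y ^ 2) := by field_simp
    _ ≤ (x + y) * (x + y) / (x ^ 3 * y ^ 2) := by gcongr; linarith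
    _ = (x + y) ^ 2 / (x ^ 3 * y ^ 2) := by rw [sq (x + y)]

theorem add_cube_div_pow_four_mul_cube_le (hx : 1 ≤ x) (hy : 1 ≤ y) :
    (x + y) ^ 3 / (x ^ 4 * y ^ 3) ≤ 2 * ((x + y) ^ 2 / (x ^ 3 * y ^ 2)) := by
  have hx₀ : 0 < x := zero_lt_one.trans_le hx
  have hy₀ : 0 < y := zero_lt_one.trans_le hy
  have h_inv_add_inv : 1 / x + 1 / y ≤ 2 := by
    linarith [div_le_one_of_le₀ hx hx₀.le, div_le_one_of_le₀ hy hy₀.le]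
  calc (x + y) ^ 3 / (x ^ 4 * y ^ 3)
      = (1 / x + 1 / y) * ((x + y) ^ 2 / (x ^ 3 * y ^ 2)) := by field_simp; ring
    _ ≤ 2 * ((x + y) ^ 2 / (x ^ 3 * y ^ 2)) := by gcongr

end Field

theorem sum_one_div_sq_le_pi_sq_div_six (s : Finset ℕ) :
    ∑ k ∈ s, 1 / (k : ℝ) ^ 2 ≤ Real.pi ^ 2 / 6 :=
  sum_le_hasSum s (fun _ _ ↦ by positivity) hasSum_zeta_two

theorem sum_Ico_div_mul_sub_sq_le (n : ℕ) :
    ∑ k ∈ Ico 1 n, ((n : ℝ) / (k * (n - k : ℕ))) ^ 2 ≤ 2 / 3 * Real.pi ^ 2 := by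
  have h_reflect : ∑ k ∈ Ico 1 n, 1 / ((n - k : ℕ) : ℝ) ^ 2 = ∑ k ∈ Ico 1 n, 1 / (k : ℝ) ^ 2 := by
    simpa only [Nat.add_sub_cancel_left, Nat.add_sub_cancel] using
      sum_Ico_reflect (fun k ↦ 1 / (k : ℝ) ^ 2) 1 n.le_succ
  calc ∑ k ∈ Ico 1 n, ((n : ℝ) / (k * (n - k : ℕ))) ^ 2
      ≤ ∑ k ∈ Ico 1 n, 2 * (1 / (k : ℝ) ^ 2 + 1 / ((n - k : ℕ) : ℝ) ^ 2) := by
        refine sum_le_sum fun k hk ↦ ?_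
        obtain ⟨hk₁, hkn⟩ := mem_Ico.1 hk
        obtain ⟨m, rfl⟩ := Nat.exists_eq_add_of_lt hkn
        rw [add_assoc, Nat.add_sub_cancel_left, Nat.cast_add k]
        exact add_div_mul_sq_le (by positivity) (by positivity)
    _ = 4 * ∑ k ∈ Ico 1 n, 1 / (k : ℝ) ^ 2 := by
        rw [← mul_sum, sum_add_distrib, h_reflect]; ring
    _ ≤ 2 / 3 * Real.pi ^ 2 := by linarith [sum_one_div_sq_le_pi_sq_div_six (Ico 1 n)]

theorem sum_comp_add_le_sum_succ_nsmul {M : Type*} [AddCommMonoid M] [PartialOrder M]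
    [IsOrderedAddMonoid M] {s : Finset (ℕ × ℕ)} {t : Finset ℕ} {f : ℕ → M}
    (hst : ∀ β ∈ s, β.1 + β.2 ∈ t) (hf : ∀ k ∈ t, 0 ≤ f k) :
    ∑ β ∈ s, f (β.1 + β.2) ≤ ∑ k ∈ t, (k + 1) • f k := by
  rw [← sum_fiberwise_of_maps_to' hst]
  refine sum_le_sum fun k hk ↦ ?_
  have h_card : #{β ∈ s | β.1 + β.2 = k} ≤ k + 1 := by
    rw [← Nat.card_antidiagonal k]
    exact card_le_card fun β hβ ↦ mem_antidiagonal.2 (mem_filter.1 hβ).2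
  rw [sum_const]
  exact nsmul_le_nsmul_left (hf k hk) h_card

theorem add_mem_Ico_of_mem_midx {α β : ℕ × ℕ} (hβ : β ∈ midx α) :
    β.1 + β.2 ∈ Ico 1 (α.1 + α.2) :=
  mem_Ico.2 (mem_filter.1 hβ).2

theorem sum_midx_sq_div_cube_mul_sq_le (α : ℕ × ℕ) :
    ∑ β ∈ midx α,
        ((α.1 + α.2 : ℕ) : ℝ) ^ 2 /
          (((β.1 + β.2 : ℕ) : ℝ) ^ 3 * (((α.1 + α.2) - (β.1 + β.2) : ℕ) : ℝ) ^ 2)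
      ≤ 4 / 3 * Real.pi ^ 2 := by
  set n := α.1 + α.2
  calc ∑ β ∈ midx α, (n : ℝ) ^ 2 / (((β.1 + β.2 : ℕ) : ℝ) ^ 3 * ((n - (β.1 + β.2) : ℕ) : ℝ) ^ 2)
      ≤ ∑ k ∈ Ico 1 n, (k + 1) • ((n : ℝ) ^ 2 / ((k : ℝ) ^ 3 * ((n - k : ℕ) : ℝ) ^ 2)) :=
        sum_comp_add_le_sum_succ_nsmul
          (f := fun k ↦ (n : ℝ) ^ 2 / ((k : ℝ) ^ 3 * ((n - k : ℕ) : ℝ) ^ 2))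
          (fun _ hβ ↦ add_mem_Ico_of_mem_midx hβ) (fun _ _ ↦ by positivity)
    _ ≤ ∑ k ∈ Ico 1 n, 2 * ((n : ℝ) / (k * (n - k : ℕ))) ^ 2 := by
        refine sum_le_sum fun k hk ↦ ?_
        have hk₁ : (1 : ℝ) ≤ k := mod_cast (mem_Ico.1 hk).1
        calc (k + 1) • ((n : ℝ) ^ 2 / ((k : ℝ) ^ 3 * ((n - k : ℕ) : ℝ) ^ 2))
            ≤ (2 * k) * ((n : ℝ) ^ 2 / ((k : ℝ) ^ 3 * ((n - k : ℕ) : ℝ) ^ 2)) := by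
              rw [nsmul_eq_mul]; gcongr; push_cast; linarith
          _ = 2 * ((n : ℝ) / (k * (n - k : ℕ))) ^ 2 := by field_simp
    _ ≤ 4 / 3 * Real.pi ^ 2 := by
        rw [← mul_sum]; linarith [sum_Ico_div_mul_sub_sq_le n]

theorem sum_midx_le_of_forall_add_eq {α : ℕ × ℕ} {F : ℝ → ℝ → ℝ} {C : ℝ} (hC : 0 ≤ C)
    (hF : ∀ x y : ℝ, 1 ≤ x → 1 ≤ y → x + y = (α.1 + α.2 : ℕ) →
      F x y ≤ C * ((x + y) ^ 2 / (x ^ 3 * y ^ 2))) :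
    ∑ β ∈ midx α, F (β.1 + β.2 : ℕ) ((α.1 + α.2) - (β.1 + β.2) : ℕ)
      ≤ 4 / 3 * Real.pi ^ 2 * C := by
  calc ∑ β ∈ midx α, F (β.1 + β.2 : ℕ) ((α.1 + α.2) - (β.1 + β.2) : ℕ)
      ≤ ∑ β ∈ midx α, C * (((α.1 + α.2 : ℕ) : ℝ) ^ 2 /
          (((β.1 + β.2 : ℕ) : ℝ) ^ 3 * (((α.1 + α.2) - (β.1 + β.2) : ℕ) : ℝ) ^ 2)) := by
        refine sum_le_sum fun β hβ ↦ ?_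
        obtain ⟨h_pos, h_lt⟩ := mem_Ico.1 (add_mem_Ico_of_mem_midx hβ)
        have h_add : ((β.1 + β.2 : ℕ) : ℝ) + ((α.1 + α.2) - (β.1 + β.2) : ℕ) =
            (α.1 + α.2 : ℕ) := mod_cast Nat.add_sub_cancel' h_lt.le
        rw [← h_add]
        exact hF _ _ (mod_cast h_pos) (mod_cast Nat.sub_pos_of_lt h_lt) h_add
    _ ≤ C * (4 / 3 * Real.pi ^ 2) := by
        rw [← mul_sum]; gcongr; exact sum_midx_sq_div_cube_mul_sq_le α
    _ = 4 / 3 * Real.pi ^ 2 * C := mul_comm _ _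

/-- Four elementary multi-index summation inequalities (Lemma 2.6-type bounds):
for every multi-index `α ∈ ℕ²`, summing over `β ≤ α` with `0 < |β| < |α|`,
(1) `Σ |α|²/(|β|³(|α|−|β|)²) ≤ 8π²`;
(2) `Σ |α|²/(|β|²(|α|−|β|)²) ≤ 8π²|α|`;
(3) `Σ |α|/(|β|³(|α|−|β|)) ≤ 8π²`;
(4) `Σ |α|³/(|β|⁴(|α|−|β|)³) ≤ 8π²`. -/
theorem multiindex_sum_bounds (α : ℕ × ℕ) :
    (∑ β ∈ midx α,
        ((α.1 + α.2 : ℕ) : ℝ) ^ 2 /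
          (((β.1 + β.2 : ℕ) : ℝ) ^ 3 * (((α.1 + α.2) - (β.1 + β.2) : ℕ) : ℝ) ^ 2)
        ≤ 8 * Real.pi ^ 2) ∧
    (∑ β ∈ midx α,
        ((α.1 + α.2 : ℕ) : ℝ) ^ 2 /
          (((β.1 + β.2 : ℕ) : ℝ) ^ 2 * (((α.1 + α.2) - (β.1 + β.2) : ℕ) : ℝ) ^ 2)
        ≤ 8 * Real.pi ^ 2 * ((α.1 + α.2 : ℕ) : ℝ)) ∧
    (∑ β ∈ midx α,
        ((α.1 + α.2 : ℕ) : ℝ) /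
          (((β.1 + β.2 : ℕ) : ℝ) ^ 3 * (((α.1 + α.2) - (β.1 + β.2) : ℕ) : ℝ))
        ≤ 8 * Real.pi ^ 2) ∧
    (∑ β ∈ midx α,
        ((α.1 + α.2 : ℕ) : ℝ) ^ 3 /
          (((β.1 + β.2 : ℕ) : ℝ) ^ 4 * (((α.1 + α.2) - (β.1 + β.2) : ℕ) : ℝ) ^ 3)
        ≤ 8 * Real.pi ^ 2) := by
  have hπ : 0 ≤ Real.pi ^ 2 := sq_nonneg _
  set n : ℝ := ((α.1 + α.2 : ℕ) : ℝ) with hn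
  have hn₀ : 0 ≤ n := Nat.cast_nonneg _
  refine ⟨?_, ?_, ?_, ?_⟩
  · linarith [sum_midx_sq_div_cube_mul_sq_le α]
  · refine (sum_midx_le_of_forall_add_eq (F := fun x y ↦ n ^ 2 / (x ^ 2 * y ^ 2)) hn₀ ?_).trans
      (by gcongr; norm_num)
    intro x y hx hy hxy
    simpa only [hn, ← hxy] using add_sq_div_sq_mul_sq_le (by linarith) (by linarith)
  · refine (sum_midx_le_of_forall_add_eq (F := fun x y ↦ n / (x ^ 3 * y)) zero_le_one ?_).trans
      (by linarith)
    intro x y hx hy hxy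
    simpa only [hn, ← hxy, one_mul] using add_div_cube_mul_le (by linarith) (by linarith)
  · refine (sum_midx_le_of_forall_add_eq (F := fun x y ↦ n ^ 3 / (x ^ 4 * y ^ 3))
      zero_le_two ?_).trans (by linarith)
    intro x y hx hy hxy
    simpa only [hn, ← hxy] using add_cube_div_pow_four_mul_cube_le hx hy
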